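/- For every positive integer n not divisible by q−1 there exists M ≥ 0 such that for all m ≥ M one has Σ_{a ∈ A_m} a^n = 0 in 𝔽_q[T]. -/

import Mathlib

/-!
A monic polynomial of degree `m` over a finite ring `R` is `X ^ m + ∑ i < m, c i * X ^ i` for a
unique `c : Fin m → R`. Expanding its `n`-th power, every term involves at most `n` of the `m`
coordinates of `c`. If `n < m`, some coordinate is free, and summing over it multiplies the term
by the cardinality of `R`, which is zero in `R`.
-/

open Polynomial

section BoxSum

variable {ι S : Type*} {α : ι → Type*} [Fintype ι] [DecidableEq ι] [∀ i, Fintype (α i)]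

theorem sum_pi_eq_zero_of_dependsOn_compl_singleton [NonAssocSemiring S] {i : ι}
    (hcard : (Fintype.card (α i) : S) = 0) {g : (∀ j, α j) → S} (hg : DependsOn g {i}ᶜ) :
    ∑ c, g c = 0 := by
  let e := (Equiv.piSplitAt i α).symm
  have slice_const (b : ∀ j : {j // j ≠ i}, α j) (a a' : α i) : g (e (a, b)) = g (e (a', b)) :=
    hg fun j hj ↦ by
      have hji : j ≠ i := hj
      simp [e, hji]
  have slice_sum (b : ∀ j : {j // j ≠ i}, α j) : ∑ a, g (e (a, b)) = 0 := by
    cases isEmpty_or_nonempty (α i) with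
    | inl _ => exact Fintype.sum_empty _
    | inr h =>
      obtain ⟨a₀⟩ := h
      rw [Fintype.sum_congr _ _ fun a ↦ slice_const b a a₀, Finset.sum_const, Finset.card_univ,
        nsmul_eq_mul, hcard, zero_mul]
  rw [← e.sum_comp, Fintype.sum_prod_type_right]
  exact Fintype.sum_eq_zero _ slice_sum

variable [Semiring S]

-- In the induction, `g` collects the factors already chosen from the expansion of the power, and
-- `s` the coordinates they involve.
theorem sum_pi_mul_add_sum_pow_eq_zero (hcard : ∀ i, (Fintype.card (α i) : S) = 0) (x : S)
    (f : ∀ i, α i → S) {k : ℕ} {s : Finset ι} {g : (∀ i, α i) → S} (hg : DependsOn g s)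
    (hk : s.card + k < Fintype.card ι) :
    ∑ c, g c * (x + ∑ i, f i (c i)) ^ k = 0 := by
  induction k generalizing s g with
  | zero =>
    obtain ⟨i, -, hi⟩ : ∃ i ∈ Finset.univ, i ∉ s := Finset.exists_mem_notMem_of_card_lt_card hk
    simp only [pow_zero, mul_one]
    exact sum_pi_eq_zero_of_dependsOn_compl_singleton (hcard i)
      (hg.mono (Set.subset_compl_singleton_iff.mpr (Finset.mem_coe.not.mpr hi)))
  | succ k ih =>
    have const_term : ∑ c, g c * x * (x + ∑ i, f i (c i)) ^ k = 0 :=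
      ih (fun c d h ↦ congrArg (· * x) (hg h)) (by omega)
    have coord_term (i : ι) : ∑ c, g c * f i (c i) * (x + ∑ j, f j (c j)) ^ k = 0 := by
      have hgf : DependsOn (fun c ↦ g c * f i (c i)) (insert i s : Finset ι) := fun c d h ↦
        congrArg₂ (· * ·) (hg fun j hj ↦ h j (Finset.mem_insert_of_mem hj))
          (congrArg (f i) (h i (Finset.mem_insert_self i s)))
      exact ih hgf (by have := Finset.card_insert_le i s; omega)
    calc ∑ c, g c * (x + ∑ i, f i (c i)) ^ (k + 1)
        = ∑ c, g c * x * (x + ∑ i, f i (c i)) ^ k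
          + ∑ i, ∑ c, g c * f i (c i) * (x + ∑ j, f j (c j)) ^ k := by
          rw [Finset.sum_comm, ← Finset.sum_add_distrib]
          simp only [pow_succ', ← mul_assoc, mul_add, add_mul, Finset.mul_sum, Finset.sum_mul]
      _ = 0 := by rw [const_term, Fintype.sum_eq_zero _ coord_term, add_zero]

theorem sum_pi_add_sum_pow_eq_zero (hcard : ∀ i, (Fintype.card (α i) : S) = 0) (x : S)
    (f : ∀ i, α i → S) {k : ℕ} (hk : k < Fintype.card ι) :
    ∑ c : ∀ i, α i, (x + ∑ i, f i (c i)) ^ k = 0 := by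
  have hone : DependsOn (fun _ : ∀ i, α i ↦ (1 : S)) (∅ : Finset ι) := by
    simpa only [Finset.coe_empty] using dependsOn_const 1
  simpa only [one_mul] using sum_pi_mul_add_sum_pow_eq_zero hcard x f hone
    (by rwa [Finset.card_empty, zero_add])

end BoxSum

theorem finsum_mem_monic_natDegree_eq {R M : Type*} [Semiring R] [Nontrivial R] [Fintype R]
    [AddCommMonoid M] (m : ℕ) (f : R[X] → M) :
    ∑ᶠ a ∈ {a : R[X] | a.Monic ∧ a.natDegree = m}, f a
      = ∑ c : Fin m → R, f (X ^ m + ∑ i : Fin m, monomial i (c i)) := by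
  let e := (monicEquivDegreeLT (R := R) m).trans (degreeLTEquiv R m).toEquiv
  rw [← finsum_set_coe_eq_finsum_mem, ← finsum_eq_sum_of_fintype]
  exact (finsum_comp_equiv e.symm).symm

theorem stmt_2_general {R : Type*} [Ring R] [Finite R] {n m : ℕ} (hnm : n < m) :
    ∑ᶠ a ∈ {a : R[X] | a.Monic ∧ a.natDegree = m}, a ^ n = 0 := by
  nontriviality R
  have := Fintype.ofFinite R
  have card_eq_zero : (Fintype.card R : R[X]) = 0 := by
    rw [← C_eq_natCast, Nat.cast_card_eq_zero, C_0]
  rw [finsum_mem_monic_natDegree_eq]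
  exact sum_pi_add_sum_pow_eq_zero (fun _ ↦ card_eq_zero) (X ^ m) (fun i : Fin m ↦ monomial i)
    (by rwa [Fintype.card_fin])

/-- For every positive integer `n` not divisible by `q - 1` there exists `M ≥ 0` such that for
all `m ≥ M` one has `Σ_{a ∈ A_m} a^n = 0` in `𝔽_q[T]`, where `A_m` is the (finite) set of
monic polynomials of degree `m`. -/
theorem stmt_2 (p s : ℕ) [Fact p.Prime] (F : Type*) [Field F] [Fintype F]
    (hq : Fintype.card F = p ^ s) (n : ℕ) (hn : 0 < n)
    (hndvd : ¬ (Fintype.card F - 1) ∣ n) :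
    ∃ M : ℕ, ∀ m ≥ M,
      (∑ᶠ a ∈ {a : Polynomial F | a.Monic ∧ a.natDegree = m}, a ^ n) = 0 :=
  ⟨n + 1, fun _ hm ↦ stmt_2_general hm⟩
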